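/- arXiv:1810.13000 — 2 statements merged into one kernel-verified Lean document; each statement's English description precedes it below -/
import Mathlib

section
/- Let λ = (λ_1,…,λ_r) be a composition of n and let t ∈ {1,…,r}. Then the permutations T_{(λ_1,…,λ_r)} and T_{(λ_1,…,λ_{t−1}, λ_t + |s_t|, λ_{t+1},…,λ_r)} have the same number of orbits, where s_t is the t-th translation parameter of λ. -/
/-!
Write `l = p ++ b :: q`, `a = p.sum`, `c = q.sum`, so that the translation parameter of the part `b`
is `s = c - a`; let `T` be the exchange of `l` and `T'` that of `l' = p ++ (b + |s|) :: q`.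
The idea is that `T` is, up to relabelling, the first return map of `T'` to the complement of an
interval `J` of length `|s|` inside the enlarged block: `J = (a, a + s]` if `s ≥ 0` and
`J = (a + b, a + b + |s|]` if `s < 0`. On `J` the map `T'` is the translation by `s`, which moves `J`
off itself, so each orbit of `T'` meets the complement of `J`. With `ψ` the increasing bijection
from `{1, …, n}` onto that complement, `ψ (T x)` is `T' (ψ x)` if this point is not in `J`,
and `T' (T' (ψ x))` otherwise. Hence `S ↦ ψ⁻¹(S)` is a bijection from the orbits of `T'` to those
of `T` (`ncard_forwardOrbits_eq`). `Texch_append_left` and `Texch_append_right` give the values of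
both exchanges in terms of those of `p` and `q`.
-/

/-- A composition: a nonempty list of positive integers. -/
def IsComposition (l : List ℕ) : Prop := l ≠ [] ∧ ∀ x ∈ l, 0 < x

/-- The `i`-th translation parameter (0-indexed):
`s_i = (sum of parts after position i) - (sum of parts before position i)`. -/
def transParam (l : List ℕ) (i : ℕ) : ℤ :=
  ((l.drop (i + 1)).sum : ℤ) - ((l.take i).sum : ℤ)

/-- The symmetric discrete interval exchange associated to `l`, as a map `ℤ → ℤ`
(acting on `{1, …, n}`, identity elsewhere): `x ∈ B_i` is sent to `x + s_i`. -/
def Texch (l : List ℕ) (x : ℤ) : ℤ :=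
  x + ∑ i ∈ Finset.range l.length,
    (if ((l.take i).sum : ℤ) < x ∧ x ≤ ((l.take (i + 1)).sum : ℤ) then transParam l i else 0)

/-- The orbit of `x` under `T_l`. -/
def orbit (l : List ℕ) (x : ℤ) : Set ℤ := {y | ∃ k : ℕ, (Texch l)^[k] x = y}

/-- The set of orbits of `T_l` on `{1, …, n}`. -/
def orbitsSet (l : List ℕ) : Set (Set ℤ) :=
  {S | ∃ x : ℤ, 1 ≤ x ∧ x ≤ (l.sum : ℤ) ∧ S = orbit l x}

/-- The number of orbits `γ(T_l)` of `T_l` on `{1, …, n}`. -/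
noncomputable def numOrbits (l : List ℕ) : ℕ := (orbitsSet l).ncard

/-! ### Values of the interval exchange -/

lemma sum_take_mono (l : List ℕ) {i j : ℕ} (h : i ≤ j) : (l.take i).sum ≤ (l.take j).sum :=
  ((List.take_prefix_take_left h).sublist).sum_le_sum (fun _ _ => Nat.zero_le _)

lemma Texch_of_mem_block (l : List ℕ) {i : ℕ} (hi : i < l.length) {x : ℤ}
    (h1 : ((l.take i).sum : ℤ) < x) (h2 : x ≤ ((l.take (i + 1)).sum : ℤ)) :
    Texch l x = x + transParam l i := by
  unfold Texch
  rw [Finset.sum_eq_single i]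
  · rw [if_pos ⟨h1, h2⟩]
  · intro j _ hji
    apply if_neg
    rintro ⟨h3, h4⟩
    rcases Nat.lt_or_gt_of_ne hji with h | h
    · have := sum_take_mono l (show j + 1 ≤ i from h)
      omega
    · have := sum_take_mono l (show i + 1 ≤ j from h)
      omega
  · intro h
    exact absurd (Finset.mem_range.2 hi) h

lemma exists_block (l : List ℕ) : ∀ x : ℤ, 1 ≤ x → x ≤ (l.sum : ℤ) →
    ∃ i < l.length, ((l.take i).sum : ℤ) < x ∧ x ≤ ((l.take (i + 1)).sum : ℤ) := by
  induction l with
  | nil => intro x h1 h2; simp at h2; omega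
  | cons b q ih =>
    intro x h1 h2
    by_cases hx : x ≤ b
    · exact ⟨0, by simp, by simp; omega, by simpa using hx⟩
    · simp only [List.sum_cons] at h2
      obtain ⟨i, hi, h3, h4⟩ := ih (x - b) (by omega) (by omega)
      refine ⟨i + 1, by simpa using hi, ?_, ?_⟩
      · simp only [List.take_succ_cons, List.sum_cons]; omega
      · simp only [List.take_succ_cons (i := i + 1), List.sum_cons]; omega

lemma Texch_cons_left (b : ℕ) (q : List ℕ) {x : ℤ} (h1 : 1 ≤ x) (h2 : x ≤ b) :
    Texch (b :: q) x = x + q.sum := by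
  rw [Texch_of_mem_block (b :: q) (i := 0) (by simp) (by simp; omega) (by simpa using h2)]
  simp [transParam, -Nat.cast_list_sum]

lemma Texch_cons_right (b : ℕ) (q : List ℕ) {x : ℤ} (h1 : b < x) (h2 : x ≤ b + q.sum) :
    Texch (b :: q) x = Texch q (x - b) := by
  obtain ⟨i, hi, h3, h4⟩ := exists_block q (x - b) (by omega) (by omega)
  rw [Texch_of_mem_block q hi h3 h4, Texch_of_mem_block (b :: q) (i := i + 1) (by simpa using hi)]
  · simp only [transParam, List.take_succ_cons, List.drop_succ_cons, List.sum_cons]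
    simp only [Nat.cast_add]
    ring
  · simp only [List.take_succ_cons, List.sum_cons]; omega
  · simp only [List.take_succ_cons (i := i + 1), List.sum_cons]; omega

lemma Texch_mem (l : List ℕ) : ∀ x : ℤ, 1 ≤ x → x ≤ (l.sum : ℤ) →
    1 ≤ Texch l x ∧ Texch l x ≤ (l.sum : ℤ) := by
  induction l with
  | nil => intro x h1 h2; simp at h2; omega
  | cons b q ih =>
    intro x h1 h2
    simp only [List.sum_cons] at h2 ⊢
    simp only [Nat.cast_add] at h2 ⊢
    by_cases hx : x ≤ b
    · rw [Texch_cons_left b q h1 hx]; omega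
    · rw [Texch_cons_right b q (by omega) h2]
      have := ih (x - b) (by omega) (by omega)
      omega

lemma Texch_inj (l : List ℕ) : ∀ x y : ℤ, 1 ≤ x → x ≤ (l.sum : ℤ) → 1 ≤ y → y ≤ (l.sum : ℤ) →
    Texch l x = Texch l y → x = y := by
  induction l with
  | nil => intro x y h1 h2; simp at h2; omega
  | cons b q ih =>
    intro x y h1 h2 h3 h4 h
    simp only [List.sum_cons] at h2 h4
    simp only [Nat.cast_add] at h2 h4
    -- The first block is sent above `q.sum`, all other blocks into `[1, q.sum]`.
    by_cases hx : x ≤ b <;> by_cases hy : y ≤ b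
    · rw [Texch_cons_left b q h1 hx, Texch_cons_left b q h3 hy] at h; omega
    · rw [Texch_cons_left b q h1 hx, Texch_cons_right b q (by omega) h4] at h
      have := Texch_mem q (y - b) (by omega) (by omega)
      omega
    · rw [Texch_cons_left b q h3 hy, Texch_cons_right b q (by omega) h2] at h
      have := Texch_mem q (x - b) (by omega) (by omega)
      omega
    · rw [Texch_cons_right b q (by omega) h2, Texch_cons_right b q (by omega) h4] at h
      have := ih (x - b) (y - b) (by omega) (by omega) (by omega) (by omega) h
      omega

lemma Texch_append_left (p m : List ℕ) : ∀ x : ℤ, 1 ≤ x → x ≤ (p.sum : ℤ) →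
    Texch (p ++ m) x = Texch p x + m.sum := by
  induction p with
  | nil => intro x h1 h2; simp at h2; omega
  | cons b q ih =>
    intro x h1 h2
    simp only [List.sum_cons] at h2
    simp only [Nat.cast_add] at h2
    rw [List.cons_append]
    by_cases hx : x ≤ b
    · rw [Texch_cons_left b _ h1 hx, Texch_cons_left b _ h1 hx, List.sum_append]
      simp only [Nat.cast_add]; ring
    · rw [Texch_cons_right b _ (by omega) h2, Texch_cons_right b _ (by omega)
        (by rw [List.sum_append]; omega), ih _ (by omega) (by omega)]

lemma Texch_append_right (p m : List ℕ) : ∀ x : ℤ, (p.sum : ℤ) < x → x ≤ p.sum + m.sum →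
    Texch (p ++ m) x = Texch m (x - p.sum) := by
  induction p with
  | nil => intro x h1 h2; simp
  | cons b q ih =>
    intro x h1 h2
    simp only [List.sum_cons] at h1 h2
    simp only [Nat.cast_add] at h1 h2
    rw [List.cons_append, Texch_cons_right b _ (by omega)
      (by rw [List.sum_append]; omega), ih _ (by omega) (by omega), List.sum_cons]
    congr 1; simp only [Nat.cast_add]; ring

/-- Every point of `{1, …, n}` is periodic, because the exchange permutes this finite set. -/
lemma Texch_periodic (l : List ℕ) (x : ℤ) (h1 : 1 ≤ x) (h2 : x ≤ (l.sum : ℤ)) :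
    ∃ k : ℕ, (Texch l)^[k] (Texch l x) = x := by
  have hm : Set.MapsTo (Texch l) (Set.Icc 1 (l.sum : ℤ)) (Set.Icc 1 (l.sum : ℤ)) :=
    fun x hx => Texch_mem l x hx.1 hx.2
  have hinj : Function.Injective (hm.restrict) := by
    intro x y h
    have h' : Texch l x = Texch l y := congrArg Subtype.val h
    exact Subtype.ext (Texch_inj l x y x.2.1 x.2.2 y.2.1 y.2.2 h')
  obtain ⟨n, hn, hp⟩ := hinj.mem_periodicPts (⟨x, h1, h2⟩ : Set.Icc 1 (l.sum : ℤ))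
  obtain ⟨k, rfl⟩ : ∃ k, n = k + 1 := ⟨n - 1, by omega⟩
  refine ⟨k, ?_⟩
  have h := congrArg Subtype.val hp
  rw [Set.MapsTo.iterate_restrict] at h
  exact h

/-! ### Orbits of a return map -/

/-- The forward orbit of `x` under an arbitrary self-map `f` of `ℤ`. -/
def forwardOrbit (f : ℤ → ℤ) (x : ℤ) : Set ℤ := {y | ∃ k : ℕ, f^[k] x = y}

lemma forwardOrbit_subset {f : ℤ → ℤ} {x y : ℤ} (h : y ∈ forwardOrbit f x) :
    forwardOrbit f y ⊆ forwardOrbit f x := by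
  obtain ⟨k, rfl⟩ := h
  rintro _ ⟨j, rfl⟩
  exact ⟨j + k, Function.iterate_add_apply f j k x⟩

lemma self_mem_forwardOrbit (f : ℤ → ℤ) (x : ℤ) : x ∈ forwardOrbit f x := ⟨0, rfl⟩

lemma apply_mem_forwardOrbit {f : ℤ → ℤ} {x y : ℤ} (h : y ∈ forwardOrbit f x) :
    f y ∈ forwardOrbit f x := by
  obtain ⟨k, rfl⟩ := h
  exact ⟨k + 1, Function.iterate_succ_apply' f k x⟩

/-- If `ψ` identifies `f` on `A` with the return map of `g` to `ψ '' A`, where a return takes at most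
two steps, and each point of `B` is `g`-periodic and enters `ψ '' A` after at most one step, then
`f` on `A` and `g` on `B` have equally many orbits. -/
lemma ncard_forwardOrbits_eq (f g ψ : ℤ → ℤ) (A B : Set ℤ) (hψ : Function.Injective ψ)
    (hf : ∀ x ∈ A, f x ∈ A) (hAB : ∀ x ∈ A, ψ x ∈ B)
    (hstep : ∀ x ∈ A, ψ (f x) = g (ψ x) ∨ (g (ψ x) ∉ Set.range ψ ∧ ψ (f x) = g (g (ψ x))))
    (hmeet : ∀ y ∈ B, y ∈ ψ '' A ∨ g y ∈ ψ '' A)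
    (hper : ∀ y ∈ B, ∃ k : ℕ, g^[k] (g y) = y) :
    {S | ∃ y ∈ B, S = forwardOrbit g y}.ncard = {S | ∃ x ∈ A, S = forwardOrbit f x}.ncard := by
  have hfk : ∀ x ∈ A, ∀ k, f^[k] x ∈ A := by
    intro x hx k
    induction k with
    | zero => exact hx
    | succ k ih => rw [Function.iterate_succ_apply']; exact hf _ ih
  have hup : ∀ x ∈ A, ∀ z ∈ forwardOrbit f x, ψ z ∈ forwardOrbit g (ψ x) := by
    rintro x hx _ ⟨k, rfl⟩
    induction k with
    | zero => exact self_mem_forwardOrbit _ _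
    | succ k ih =>
      rw [Function.iterate_succ_apply']
      rcases hstep _ (hfk x hx k) with h | ⟨-, h⟩
      · rw [h]; exact apply_mem_forwardOrbit ih
      · rw [h]; exact apply_mem_forwardOrbit (apply_mem_forwardOrbit ih)
  have hdown : ∀ x ∈ A, ∀ k, (∃ j, g^[k] (ψ x) = ψ (f^[j] x)) ∨
      (g^[k] (ψ x) ∉ Set.range ψ ∧ ∃ j, g (g^[k] (ψ x)) = ψ (f^[j] x)) := by
    intro x hx k
    induction k with
    | zero => exact Or.inl ⟨0, rfl⟩
    | succ k ih =>
      rw [Function.iterate_succ_apply']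
      rcases ih with ⟨j, hj⟩ | ⟨-, j, hj⟩
      · rw [hj]
        rcases hstep _ (hfk x hx j) with h | ⟨h1, h⟩
        · exact Or.inl ⟨j + 1, by rw [Function.iterate_succ_apply', h]⟩
        · exact Or.inr ⟨h1, j + 1, by rw [Function.iterate_succ_apply', h]⟩
      · exact Or.inl ⟨j, hj⟩
  have hpre : ∀ x ∈ A, ψ ⁻¹' forwardOrbit g (ψ x) = forwardOrbit f x := by
    intro x hx
    ext z
    constructor
    · rintro ⟨k, hk⟩
      rcases hdown x hx k with ⟨j, hj⟩ | ⟨h, -⟩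
      · exact ⟨j, hψ (hj.symm.trans hk)⟩
      · exact absurd ⟨z, hk.symm⟩ h
    · exact hup x hx z
  have hrep : ∀ y ∈ B, ∃ x ∈ A, forwardOrbit g y = forwardOrbit g (ψ x) := by
    intro y hy
    rcases hmeet y hy with ⟨x, hx, h⟩ | ⟨x, hx, h⟩
    · exact ⟨x, hx, by rw [h]⟩
    · refine ⟨x, hx, ?_⟩
      rw [h]
      exact Set.Subset.antisymm (forwardOrbit_subset (hper y hy))
        (forwardOrbit_subset (apply_mem_forwardOrbit (self_mem_forwardOrbit g y)))
  have hinj : Set.InjOn (fun S => ψ ⁻¹' S) {S | ∃ y ∈ B, S = forwardOrbit g y} := by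
    rintro _ ⟨y, hy, rfl⟩ _ ⟨y', hy', rfl⟩ h
    obtain ⟨x, hx, e⟩ := hrep y hy
    obtain ⟨x', hx', e'⟩ := hrep y' hy'
    simp only [e, e'] at h ⊢
    rw [hpre x hx, hpre x' hx'] at h
    apply Set.Subset.antisymm
    · exact forwardOrbit_subset (hup x' hx' x (h ▸ self_mem_forwardOrbit f x))
    · exact forwardOrbit_subset (hup x hx x' (h ▸ self_mem_forwardOrbit f x'))
  rw [← hinj.ncard_image]
  congr 1
  ext S
  constructor
  · rintro ⟨_, ⟨y, hy, rfl⟩, rfl⟩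
    obtain ⟨x, hx, e⟩ := hrep y hy
    exact ⟨x, hx, by simp only [e, hpre x hx]⟩
  · rintro ⟨x, hx, rfl⟩
    exact ⟨_, ⟨ψ x, hAB x hx, rfl⟩, hpre x hx⟩

/-! ### Enlarging one part -/

lemma numOrbits_eq_ncard (l : List ℕ) :
    numOrbits l = {S | ∃ x ∈ Set.Icc (1 : ℤ) l.sum, S = forwardOrbit (Texch l) x}.ncard := by
  unfold numOrbits orbitsSet
  congr 1
  ext S
  simp only [Set.mem_ofPred_eq, Set.mem_Icc, and_assoc]
  rfl

/-- The three regimes of the exchange of `p ++ b :: q`: before, inside and after the part `b`. -/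
lemma Texch_split (p q : List ℕ) (b : ℕ) (x : ℤ) :
    (1 ≤ x → x ≤ p.sum → Texch (p ++ b :: q) x = Texch p x + b + q.sum) ∧
    (p.sum < x → x ≤ p.sum + b → Texch (p ++ b :: q) x = x - p.sum + q.sum) ∧
    (p.sum + b < x → x ≤ p.sum + b + q.sum →
      Texch (p ++ b :: q) x = Texch q (x - p.sum - b)) := by
  refine ⟨fun h1 h2 => ?_, fun h1 h2 => ?_, fun h1 h2 => ?_⟩
  · rw [Texch_append_left p _ x h1 h2, List.sum_cons]; simp only [Nat.cast_add]; ring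
  · rw [Texch_append_right p _ x h1 (by rw [List.sum_cons]; omega),
      Texch_cons_left _ _ (by omega) (by omega)]
  · rw [Texch_append_right p _ x (by omega) (by rw [List.sum_cons]; omega),
      Texch_cons_right _ _ (by omega) (by omega)]

/-- The order embedding `ℤ → ℤ` that skips the interval `(e, e + d]`. -/
def skipInterval (e : ℤ) (d : ℕ) (x : ℤ) : ℤ := if x ≤ e then x else x + d

lemma skip_injective (e : ℤ) (d : ℕ) : Function.Injective (skipInterval e d) := by
  intro x y h
  unfold skipInterval at h
  split_ifs at h <;> omega

lemma not_mem_range_skip {e : ℤ} {d : ℕ} {y : ℤ} (h1 : e < y) (h2 : y ≤ e + d) :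
    y ∉ Set.range (skipInterval e d) := by
  rintro ⟨x, h⟩
  unfold skipInterval at h
  split_ifs at h <;> omega

lemma mem_image_skip {e : ℤ} {d : ℕ} {N y : ℤ} (he0 : 0 ≤ e) (heN : e ≤ N) (h1 : 1 ≤ y)
    (h2 : y ≤ N + d) (h : y ≤ e ∨ e + d < y) : y ∈ skipInterval e d '' Set.Icc 1 N := by
  rcases h with h | h
  · exact ⟨y, ⟨h1, by omega⟩, by unfold skipInterval; rw [if_pos h]⟩
  · exact ⟨y - d, ⟨by omega, by omega⟩, by unfold skipInterval; rw [if_neg (by omega)]; ring⟩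

lemma numOrbits_enlarge (p q : List ℕ) (b : ℕ) :
    numOrbits (p ++ (b + ((q.sum : ℤ) - p.sum).natAbs) :: q) = numOrbits (p ++ b :: q) := by
  obtain ⟨d, hd⟩ : ∃ d, d = ((q.sum : ℤ) - p.sum).natAbs := ⟨_, rfl⟩
  rw [← hd, numOrbits_eq_ncard, numOrbits_eq_ncard]
  have hs : (((p ++ b :: q).sum : ℕ) : ℤ) = p.sum + b + q.sum := by
    rw [List.sum_append, List.sum_cons]; simp only [Nat.cast_add]; ring
  have hs' : (((p ++ (b + d) :: q).sum : ℕ) : ℤ) = p.sum + b + q.sum + d := by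
    rw [List.sum_append, List.sum_cons]; simp only [Nat.cast_add]; ring
  -- The removed interval `J = (e, e + d]` lies at the left end of the enlarged block if `s ≥ 0`,
  -- and at its right end if `s < 0`.
  obtain ⟨e, he⟩ : ∃ e : ℤ, (p.sum ≤ q.sum ∧ e = p.sum) ∨ (q.sum < p.sum ∧ e = p.sum + b) := by
    rcases Nat.lt_or_ge q.sum p.sum with h | h
    · exact ⟨_, Or.inr ⟨h, rfl⟩⟩
    · exact ⟨_, Or.inl ⟨h, rfl⟩⟩
  apply ncard_forwardOrbits_eq _ _ (skipInterval e d) _ _ (skip_injective e d)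
  · intro x hx; exact Texch_mem _ x hx.1 hx.2
  · rintro x ⟨h1, h2⟩
    rw [hs] at h2
    rw [hs', Set.mem_Icc]
    unfold skipInterval
    split_ifs <;> omega
  · rintro x ⟨h1, h2⟩
    rw [hs] at h2
    have hJ : ∀ y, e < y → y ≤ e + d →
        Texch (p ++ (b + d) :: q) y = y - p.sum + q.sum := by
      intro y h3 h4
      exact (Texch_split p q (b + d) y).2.1 (by omega) (by omega)
    -- It suffices to compute `y = T' (ψ x)`: if it lies in `J`, one more step is `y + s`.
    have key : ∀ y, Texch (p ++ (b + d) :: q) (skipInterval e d x) = y →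
        (skipInterval e d (Texch (p ++ b :: q) x) = y ∨ (e < y ∧ y ≤ e + d ∧
          skipInterval e d (Texch (p ++ b :: q) x) = y - p.sum + q.sum)) →
        skipInterval e d (Texch (p ++ b :: q) x) = Texch (p ++ (b + d) :: q) (skipInterval e d x) ∨
        (Texch (p ++ (b + d) :: q) (skipInterval e d x) ∉ Set.range (skipInterval e d) ∧
          skipInterval e d (Texch (p ++ b :: q) x) =
            Texch (p ++ (b + d) :: q) (Texch (p ++ (b + d) :: q) (skipInterval e d x))) := by
      rintro y rfl (h | ⟨h3, h4, h5⟩)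
      · exact Or.inl h
      · exact Or.inr ⟨not_mem_range_skip h3 h4, by rw [hJ _ h3 h4]; exact h5⟩
    obtain ⟨t1, t2, t3⟩ := Texch_split p q b x
    obtain ⟨u1, u2, u3⟩ := Texch_split p q (b + d) (skipInterval e d x)
    simp only [Nat.cast_add] at u1 u2 u3
    by_cases hxa : x ≤ p.sum
    · have hm := Texch_mem p x h1 hxa
      have hsk : skipInterval e d x = x := by unfold skipInterval; rw [if_pos (by omega)]
      rw [hsk] at u1
      refine key (Texch p x + (b + d) + q.sum) (by rw [hsk]; exact u1 h1 hxa) ?_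
      rw [t1 h1 hxa]
      unfold skipInterval
      split_ifs <;> omega
    · by_cases hxb : x ≤ p.sum + b
      · rw [t2 (by omega) hxb] at key ⊢
        have hsk : p.sum < skipInterval e d x ∧ skipInterval e d x ≤ p.sum + (b + d) := by
          unfold skipInterval; split_ifs <;> omega
        refine key _ (u2 hsk.1 hsk.2) ?_
        unfold skipInterval
        split_ifs <;> omega
      · have hm := Texch_mem q (x - p.sum - b) (by omega) (by omega)
        have hsk : skipInterval e d x = x + d := by unfold skipInterval; rw [if_neg (by omega)]
        rw [t3 (by omega) h2] at key ⊢
        have harg : x + d - p.sum - (b + d) = x - p.sum - b := by ring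
        rw [hsk, harg] at u3
        refine key (Texch q (x - p.sum - b)) (by rw [hsk]; exact u3 (by omega) (by omega)) ?_
        unfold skipInterval
        split_ifs <;> omega
  · rintro y ⟨h1, h2⟩
    rw [hs'] at h2
    rw [hs]
    by_cases hy : e < y ∧ y ≤ e + d
    · right
      rw [(Texch_split p q (b + d) y).2.1 (by omega) (by omega)]
      apply mem_image_skip <;> omega
    · left
      apply mem_image_skip <;> omega
  · rintro y ⟨h1, h2⟩; exact Texch_periodic _ y h1 h2

/-- Lemma 3.3: replacing `λ_t` by `λ_t + |s_t|` does not change the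
number of orbits of the symmetric discrete interval exchange. -/
theorem numOrbits_set_add_abs_transParam (l : List ℕ) (hl : IsComposition l)
    (t : ℕ) (ht : t < l.length) :
    numOrbits (l.set t (l.getD t 0 + (transParam l t).natAbs)) = numOrbits l := by
  have h := numOrbits_enlarge (l.take t) (l.drop (t + 1)) l[t]
  rw [← List.drop_eq_getElem_cons ht, List.take_append_drop] at h
  rw [List.set_eq_take_append_cons_drop, if_pos ht, List.getD_eq_getElem _ _ ht]
  exact h
end

section
/- A symmetric discrete interval exchange T_λ is minimal (has exactly one orbit) if and only if f(λ) = 1, where f is the recursive orbit-counting function. -/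
private lemma eraseIdx_sum_aux (l : List ℕ) (t : ℕ) (ht : t < l.length) :
    (l.eraseIdx t).sum + l.getD t 0 = l.sum := by
  induction l generalizing t with
  | nil => simp at ht
  | cons a l ih =>
    cases t with
    | zero => simp [List.eraseIdx, Nat.add_comm]
    | succ t =>
      simp only [List.eraseIdx, List.sum_cons, List.getD_cons_succ]
      have := ih t (by simpa using Nat.lt_of_succ_lt_succ ht)
      omega

private lemma set_sum_aux (l : List ℕ) (t : ℕ) (ht : t < l.length) (v : ℕ) :
    (l.set t v).sum + l.getD t 0 = l.sum + v := by
  induction l generalizing t with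
  | nil => simp at ht
  | cons a l ih =>
    cases t with
    | zero => simp [List.set]; omega
    | succ t =>
      simp only [List.set, List.sum_cons, List.getD_cons_succ]
      have := ih t (by simpa using Nat.lt_of_succ_lt_succ ht)
      omega

def fRec (l : List ℕ) : ℕ :=
  if hl : l.length ≤ 1 then l.sum
  else if hex : ∃ t, t < l.length ∧ |transParam l t| ≤ (l.getD t 0 : ℤ) then
    let t := Nat.find hex
    if hs0 : transParam l t = 0 then l.getD t 0 + fRec (l.eraseIdx t)
    else if heq : (l.getD t 0 : ℤ) = |transParam l t| then fRec (l.eraseIdx t)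
    else fRec (l.set t (l.getD t 0 - (transParam l t).natAbs))
  else 0
termination_by l.sum + l.length
decreasing_by
  · have ht := (Nat.find_spec hex).1
    have h1 := eraseIdx_sum_aux l _ ht
    have h2 : (l.eraseIdx (Nat.find hex)).length + 1 = l.length :=
      List.length_eraseIdx_add_one ht
    omega
  · have ht := (Nat.find_spec hex).1
    have h1 := eraseIdx_sum_aux l _ ht
    have h2 : (l.eraseIdx (Nat.find hex)).length + 1 = l.length :=
      List.length_eraseIdx_add_one ht
    omega
  · have ht := (Nat.find_spec hex).1
    have habs := (Nat.find_spec hex).2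
    set t := Nat.find hex
    have hpos : 1 ≤ (transParam l t).natAbs := Int.natAbs_pos.mpr hs0
    have hle : (transParam l t).natAbs ≤ l.getD t 0 := by
      have h : ((transParam l t).natAbs : ℤ) ≤ (l.getD t 0 : ℤ) := by
        rw [← Int.abs_eq_natAbs]; exact habs
      exact_mod_cast h
    have h1 := set_sum_aux l t ht (l.getD t 0 - (transParam l t).natAbs)
    have h2 : (l.set t (l.getD t 0 - (transParam l t).natAbs)).length = l.length :=
      List.length_set ..
    omega

/-! ### Closed form of the interval exchange -/

/-- For `x` in the `i`-th block, the sum of the parts before block `i` plus the sum of the parts up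
to and including block `i`; then `T_l x = x + n - blockSum l x`. -/
def blockSum : List ℕ → ℤ → ℤ
  | [], _ => 0
  | m :: b, x => if x ≤ m then m else 2 * m + blockSum b (x - m)

lemma sum_blocks (l : List ℕ) (N x : ℤ) :
    (∑ i ∈ Finset.range l.length,
      (if ((l.take i).sum : ℤ) < x ∧ x ≤ ((l.take (i + 1)).sum : ℤ)
        then N - ((l.take i).sum : ℤ) - ((l.take (i + 1)).sum : ℤ) else 0))
      = if 0 < x ∧ x ≤ (l.sum : ℤ) then N - blockSum l x else 0 := by
  induction l generalizing N x with
  | nil =>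
    rw [if_neg (by rw [List.sum_nil]; omega)]
    rfl
  | cons m b ih =>
    rw [List.length_cons, Finset.sum_range_succ']
    have key : ∀ i : ℕ,
        (if (((m :: b).take (i + 1)).sum : ℤ) < x ∧ x ≤ (((m :: b).take (i + 1 + 1)).sum : ℤ)
          then N - (((m :: b).take (i + 1)).sum : ℤ) - (((m :: b).take (i + 1 + 1)).sum : ℤ)
          else 0)
        = (if ((b.take i).sum : ℤ) < x - m ∧ x - m ≤ ((b.take (i + 1)).sum : ℤ)
          then (N - 2 * m) - ((b.take i).sum : ℤ) - ((b.take (i + 1)).sum : ℤ) else 0) := by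
      intro i
      simp only [List.take_succ_cons, List.sum_cons]
      simp only [Nat.cast_add]
      split_ifs <;> omega
    rw [Finset.sum_congr rfl (fun i _ => key i), ih]
    simp only [blockSum, List.take_zero, List.take_succ_cons, List.sum_cons, List.sum_nil]
    simp only [Nat.cast_add, Nat.cast_zero]
    split_ifs <;> omega

lemma Texch_eq (l : List ℕ) (x : ℤ) :
    Texch l x = if 0 < x ∧ x ≤ (l.sum : ℤ) then x + l.sum - blockSum l x else x := by
  have h : Texch l x = x + ∑ i ∈ Finset.range l.length,
      (if ((l.take i).sum : ℤ) < x ∧ x ≤ ((l.take (i + 1)).sum : ℤ)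
        then (l.sum : ℤ) - ((l.take i).sum : ℤ) - ((l.take (i + 1)).sum : ℤ) else 0) := by
    unfold Texch
    congr 1
    refine Finset.sum_congr rfl fun i _ => ?_
    have : transParam l i
        = (l.sum : ℤ) - ((l.take i).sum : ℤ) - ((l.take (i + 1)).sum : ℤ) := by
      have h1 := List.sum_take_add_sum_drop l (i + 1)
      unfold transParam
      omega
    rw [this]
  rw [h, sum_blocks]
  split_ifs <;> omega

lemma blockSum_bounds (l : List ℕ) (x : ℤ) (h0 : 0 < x) (h1 : x ≤ l.sum) :
    0 < x + l.sum - blockSum l x ∧ x + l.sum - blockSum l x ≤ l.sum := by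
  induction l generalizing x with
  | nil => simp at h1; omega
  | cons m b ih =>
    simp only [blockSum, List.sum_cons] at h1 ⊢
    simp only [Nat.cast_add] at h1 ⊢
    split_ifs with h
    · omega
    · have := ih (x - m) (by omega) (by omega)
      omega

lemma blockSum_inj (l : List ℕ) (x y : ℤ) (hx0 : 0 < x) (hx1 : x ≤ l.sum) (hy0 : 0 < y)
    (hy1 : y ≤ l.sum) (h : x - blockSum l x = y - blockSum l y) : x = y := by
  induction l generalizing x y with
  | nil => simp at hx1; omega
  | cons m b ih =>
    simp only [blockSum, List.sum_cons] at hx1 hy1 h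
    simp only [Nat.cast_add] at hx1 hy1
    split_ifs at h with h1 h2 h2
    · omega
    · have := blockSum_bounds b (y - m) (by omega) (by omega)
      omega
    · have := blockSum_bounds b (x - m) (by omega) (by omega)
      omega
    · have := ih (x - m) (y - m) (by omega) (by omega) (by omega) (by omega) (by omega)
      omega

lemma blockSum_append (a b : List ℕ) (x : ℤ) (h0 : 0 < x) :
    blockSum (a ++ b) x = if x ≤ a.sum then blockSum a x
      else 2 * a.sum + blockSum b (x - a.sum) := by
  induction a generalizing x with
  | nil =>
    rw [if_neg (by simpa using h0)]
    simp
  | cons m a ih =>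
    simp only [List.cons_append, blockSum, List.sum_cons]
    simp only [Nat.cast_add]
    by_cases h : x ≤ m
    · rw [if_pos h, if_pos (by omega), if_pos h]
    · rw [if_neg h, if_neg h, ih (x - m) (by omega)]
      have e : x - (m + (a.sum : ℤ)) = x - m - a.sum := by ring
      rw [e]
      split_ifs <;> omega

lemma Texch_left (a b : List ℕ) (m : ℕ) (x : ℤ) (h0 : 0 < x) (h1 : x ≤ a.sum) :
    Texch (a ++ m :: b) x = x + (a.sum + m + b.sum) - blockSum a x := by
  rw [Texch_eq, blockSum_append _ _ _ h0, if_pos h1, if_pos]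
  · simp only [List.sum_append, List.sum_cons, Nat.cast_add]; ring
  · simp only [List.sum_append, List.sum_cons, Nat.cast_add]; omega

lemma Texch_mid (a b : List ℕ) (m : ℕ) (x : ℤ) (h0 : a.sum < x) (h1 : x ≤ a.sum + m) :
    Texch (a ++ m :: b) x = x + b.sum - a.sum := by
  have hs : ((a ++ m :: b).sum : ℤ) = a.sum + (m + b.sum) := by
    simp only [List.sum_append, List.sum_cons, Nat.cast_add]
  rw [Texch_eq, hs, if_pos (by omega), blockSum_append _ _ _ (by omega), if_neg (by omega),
    blockSum, if_pos (by omega)]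
  ring

lemma Texch_right (a b : List ℕ) (m : ℕ) (x : ℤ) (h0 : a.sum + m < x)
    (h1 : x ≤ a.sum + m + b.sum) :
    Texch (a ++ m :: b) x = x + b.sum - a.sum - m - blockSum b (x - a.sum - m) := by
  have hs : ((a ++ m :: b).sum : ℤ) = a.sum + (m + b.sum) := by
    simp only [List.sum_append, List.sum_cons, Nat.cast_add]
  rw [Texch_eq, hs, if_pos (by omega), blockSum_append _ _ _ (by omega), if_neg (by omega),
    blockSum, if_neg (by omega)]
  ring

lemma Texch_mapsTo (l : List ℕ) :
    Set.MapsTo (Texch l) (Set.Icc 1 (l.sum : ℤ)) (Set.Icc 1 (l.sum : ℤ)) := by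
  rintro x ⟨h0, h1⟩
  have := blockSum_bounds l x (by omega) h1
  rw [Texch_eq, if_pos (by omega)]
  constructor <;> omega

lemma Texch_injOn (l : List ℕ) : Set.InjOn (Texch l) (Set.Icc 1 (l.sum : ℤ)) := by
  rintro x ⟨hx0, hx1⟩ y ⟨hy0, hy1⟩ h
  rw [Texch_eq, Texch_eq, if_pos (by omega), if_pos (by omega)] at h
  exact blockSum_inj l x y (by omega) hx1 (by omega) hy1 (by omega)

/-! ### Orbits of an injective self-map of a finite set -/

/-- The forward orbit of `x` under `f`. -/
def orb (f : ℤ → ℤ) (x : ℤ) : Set ℤ := {y | ∃ k : ℕ, f^[k] x = y}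

lemma orb_step_subset (f : ℤ → ℤ) {x y : ℤ} (h : y ∈ orb f x) : orb f y ⊆ orb f x := by
  obtain ⟨k, rfl⟩ := h
  rintro _ ⟨j, rfl⟩
  exact ⟨j + k, Function.iterate_add_apply f j k x⟩

lemma orb_eq_iff {f : ℤ → ℤ} {X : Set ℤ} (hX : X.Finite) (hm : Set.MapsTo f X X)
    (hi : Set.InjOn f X) {x y : ℤ} (hx : x ∈ X) : orb f x = orb f y ↔ y ∈ orb f x := by
  constructor
  · intro h
    rw [h]
    exact ⟨0, rfl⟩
  · intro h
    refine Set.Subset.antisymm (orb_step_subset f ?_) (orb_step_subset f h)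
    obtain ⟨k, rfl⟩ := h
    have : Finite X := hX
    have hinj : Function.Injective (hm.restrict f X X) := hm.restrict_inj.2 hi
    obtain ⟨p, hp, hper⟩ := hinj.mem_periodicPts (⟨x, hx⟩ : X)
    have hper' : f^[p] x = x := by
      have h1 := congrArg Subtype.val hper.eq
      rwa [hm.iterate_restrict, Set.MapsTo.val_restrict_apply] at h1
    -- Iterating `f` on `f^[k] x` a further `p * k - k` times completes `k` full periods.
    refine ⟨p * k - k, ?_⟩
    have hk : k ≤ p * k := Nat.le_mul_of_pos_left k hp
    rw [← Function.iterate_add_apply, Nat.sub_add_cancel hk]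
    exact (Function.IsPeriodicPt.mul_const (show Function.IsPeriodicPt f p x from hper') k).eq

lemma ncard_image_congr {u v : ℤ → Set ℤ} {Y : Set ℤ}
    (h : ∀ y ∈ Y, ∀ z ∈ Y, (u y = u z ↔ v y = v z)) : (u '' Y).ncard = (v '' Y).ncard := by
  classical
  refine Set.ncard_congr (fun S hS => v hS.choose) ?_ ?_ ?_
  · intro S hS
    exact ⟨_, hS.choose_spec.1, rfl⟩
  · intro S S' hS hS' e
    rw [← hS.choose_spec.2, ← hS'.choose_spec.2]
    exact (h _ hS.choose_spec.1 _ hS'.choose_spec.1).2 e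
  · rintro _ ⟨y, hy, rfl⟩
    have hS : u y ∈ u '' Y := ⟨y, hy, rfl⟩
    exact ⟨u y, hS, (h _ hS.choose_spec.1 _ hy).1 hS.choose_spec.2⟩

/-- If `φ` conjugates `g` on `Y` to the first return map of `f` to `φ '' Y`, with return times at
most two, then `f`-orbits through `φ '' Y` correspond to `g`-orbits. -/
lemma orb_conj {f g φ : ℤ → ℤ} {X Y : Set ℤ} (hX : X.Finite) (hmf : Set.MapsTo f X X)
    (hif : Set.InjOn f X) (hY : Y.Finite) (hmg : Set.MapsTo g Y Y) (hig : Set.InjOn g Y)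
    (hφ : Set.MapsTo φ Y X) (hφi : Set.InjOn φ Y)
    (hret : ∀ y ∈ Y, φ (g y) = f (φ y) ∨ (φ (g y) = f (f (φ y)) ∧ f (φ y) ∉ φ '' Y)) :
    ((fun y => orb f (φ y)) '' Y).ncard = (orb g '' Y).ncard := by
  refine ncard_image_congr fun y hy z hz => ?_
  rw [orb_eq_iff hX hmf hif (hφ hy), orb_eq_iff hY hmg hig hy]
  constructor
  · rintro ⟨k, hk⟩
    induction k using Nat.strong_induction_on generalizing y with
    | _ k ih =>
      match k with
      | 0 => exact ⟨0, hφi hy hz hk⟩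
      | 1 =>
        rcases hret y hy with h | ⟨_, h⟩
        · exact ⟨1, hφi (hmg hy) hz (h.trans hk)⟩
        · exact absurd ⟨z, hz, hk.symm⟩ h
      | k + 2 =>
        have hsub : orb g (g y) ⊆ orb g y := orb_step_subset g ⟨1, rfl⟩
        rcases hret y hy with h | ⟨h, _⟩
        · refine hsub (ih (k + 1) (by omega) (g y) (hmg hy) ?_)
          rw [h, ← hk]
          rfl
        · refine hsub (ih k (by omega) (g y) (hmg hy) ?_)
          rw [h, ← hk]
          rfl
  · rintro ⟨k, rfl⟩
    clear hz
    induction k generalizing y with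
    | zero => exact ⟨0, rfl⟩
    | succ k ih =>
      have h1 := ih (g y) (hmg hy)
      rw [Function.iterate_succ_apply]
      refine orb_step_subset f ?_ h1
      rcases hret y hy with h | ⟨h, _⟩
      · exact ⟨1, h.symm⟩
      · exact ⟨2, h.symm⟩

/-- Discarding points that `f` sends into `φ '' Y` does not change the number of orbits. -/
lemma orb_collapse_ncard {f g φ : ℤ → ℤ} {X Y : Set ℤ} (hX : X.Finite) (hmf : Set.MapsTo f X X)
    (hif : Set.InjOn f X) (hY : Y.Finite) (hmg : Set.MapsTo g Y Y) (hig : Set.InjOn g Y)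
    (hφ : Set.MapsTo φ Y X) (hφi : Set.InjOn φ Y)
    (hret : ∀ y ∈ Y, φ (g y) = f (φ y) ∨ (φ (g y) = f (f (φ y)) ∧ f (φ y) ∉ φ '' Y))
    (hE : ∀ x ∈ X, x ∈ φ '' Y ∨ f x ∈ φ '' Y) :
    (orb f '' X).ncard = (orb g '' Y).ncard := by
  rw [← orb_conj hX hmf hif hY hmg hig hφ hφi hret]
  congr 1
  apply Set.Subset.antisymm
  · rintro _ ⟨x, hx, rfl⟩
    rcases hE x hx with ⟨y, hy, h⟩ | ⟨y, hy, h⟩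
    · exact ⟨y, hy, by simp only [h]⟩
    · refine ⟨y, hy, ?_⟩
      simp only [h]
      exact ((orb_eq_iff hX hmf hif hx).2 ⟨1, rfl⟩).symm
  · rintro _ ⟨y, hy, rfl⟩
    exact ⟨φ y, hφ hy, rfl⟩

/-- Every discarded point being fixed by `f`, each of them contributes one orbit. -/
lemma orb_fixed_ncard {f g φ : ℤ → ℤ} {X Y : Set ℤ} (hX : X.Finite) (hmf : Set.MapsTo f X X)
    (hif : Set.InjOn f X) (hY : Y.Finite) (hmg : Set.MapsTo g Y Y) (hig : Set.InjOn g Y)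
    (hφ : Set.MapsTo φ Y X) (hφi : Set.InjOn φ Y)
    (hret : ∀ y ∈ Y, φ (g y) = f (φ y)) (hE : ∀ x ∈ X, x ∉ φ '' Y → f x = x) :
    (orb f '' X).ncard = (X \ φ '' Y).ncard + (orb g '' Y).ncard := by
  rw [← orb_conj hX hmf hif hY hmg hig hφ hφi fun y hy => Or.inl (hret y hy)]
  have hfix : ∀ x ∈ X \ φ '' Y, orb f x = {x} := by
    rintro x ⟨hx, hx'⟩
    ext z
    constructor
    · rintro ⟨k, rfl⟩
      exact Function.iterate_fixed (hE x hx hx') k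
    · rintro rfl
      exact ⟨0, rfl⟩
  have hinj : Set.InjOn (orb f) (X \ φ '' Y) := by
    intro x hx y hy h
    rw [hfix x hx, hfix y hy] at h
    exact Set.singleton_injective h
  rw [← hinj.ncard_image, ← Set.ncard_union_eq ?_ ((hX.sdiff).image _) (hY.image _)]
  · congr 1
    have : (fun y => orb f (φ y)) '' Y = orb f '' (φ '' Y) := (Set.image_image _ _ _).symm
    rw [this, ← Set.image_union, Set.sdiff_union_of_subset hφ.image_subset]
  · rw [Set.disjoint_left]
    rintro _ ⟨x, hx, rfl⟩ ⟨y, hy, h⟩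
    have h1 : φ y ∈ orb f x := by
      rw [← h]
      exact ⟨0, rfl⟩
    rw [hfix x hx] at h1
    exact hx.2 ⟨y, hy, h1⟩

lemma numOrbits_eq (l : List ℕ) :
    numOrbits l = (orb (Texch l) '' Set.Icc 1 (l.sum : ℤ)).ncard := by
  unfold numOrbits orbitsSet
  congr 1
  ext S
  constructor
  · rintro ⟨x, h0, h1, rfl⟩
    exact ⟨x, ⟨h0, h1⟩, rfl⟩
  · rintro ⟨x, ⟨h0, h1⟩, rfl⟩
    exact ⟨x, h0, h1, rfl⟩

/-! ### The reduction steps -/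

/-- The increasing map of `ℤ` whose image misses exactly the interval `(c, c + s]`. -/
def skip (c s y : ℤ) : ℤ := if y ≤ c then y else y + s

lemma skip_injOn (c s : ℤ) (hs : 0 ≤ s) (Y : Set ℤ) : Set.InjOn (skip c s) Y := by
  intro x _ y _ h
  unfold skip at h
  split_ifs at h <;> omega

lemma mem_skip_image (c s n x : ℤ) (hs : 0 ≤ s) (hn : c ≤ n) :
    x ∈ skip c s '' Set.Icc 1 n ↔ (1 ≤ x ∧ x ≤ c) ∨ (c + s < x ∧ 1 ≤ x - s ∧ x ≤ n + s) := by
  constructor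
  · rintro ⟨y, ⟨h0, h1⟩, rfl⟩
    unfold skip
    split_ifs <;> omega
  · rintro (h | h)
    · refine ⟨x, ⟨by omega, by omega⟩, ?_⟩
      rw [skip, if_pos h.2]
    · refine ⟨x - s, ⟨by omega, by omega⟩, ?_⟩
      rw [skip, if_neg (by omega)]
      ring

/-- Shrinking a part `m` by the absolute value of its nonzero translation parameter. -/
lemma numOrbits_reduce (a b : List ℕ) (m m' : ℕ) (hne : a.sum ≠ b.sum)
    (hm : (m : ℤ) = m' + |(b.sum : ℤ) - a.sum|) :
    numOrbits (a ++ m :: b) = numOrbits (a ++ m' :: b) := by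
  have hsum : ∀ k : ℕ, ((a ++ k :: b).sum : ℤ) = a.sum + k + b.sum := by
    intro k
    simp only [List.sum_append, List.sum_cons, Nat.cast_add]
    ring
  have hL : ∀ x : ℤ, 0 < x → x ≤ a.sum →
      0 < x + a.sum - blockSum a x ∧ x + a.sum - blockSum a x ≤ a.sum :=
    fun x h0 h1 => blockSum_bounds a x h0 h1
  have hR : ∀ x : ℤ, 0 < x → x ≤ b.sum →
      0 < x + b.sum - blockSum b x ∧ x + b.sum - blockSum b x ≤ b.sum :=
    fun x h0 h1 => blockSum_bounds b x h0 h1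
  rw [numOrbits_eq, numOrbits_eq]
  rcases lt_or_gt_of_ne hne with hlt | hlt
  -- `A < B`: discard the first `B - A` points of the block.
  · rw [abs_of_pos (by omega)] at hm
    have himg := fun x => mem_skip_image a.sum (b.sum - a.sum)
      ((a ++ m' :: b).sum : ℤ) x (by omega) (by rw [hsum]; omega)
    refine orb_collapse_ncard (φ := skip a.sum (b.sum - a.sum)) (Set.finite_Icc _ _)
      (Texch_mapsTo _) (Texch_injOn _) (Set.finite_Icc _ _) (Texch_mapsTo _) (Texch_injOn _)
      ?_ (skip_injOn _ _ (by omega) _) ?_ ?_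
    · rintro y ⟨h0, h1⟩
      rw [hsum] at h1
      simp only [Set.mem_Icc, skip, hsum]
      split_ifs <;> omega
    · rintro y ⟨h0, h1⟩
      rw [himg]
      rw [hsum] at h1 ⊢
      by_cases c1 : y ≤ a.sum
      · have := hL y (by omega) c1
        left
        rw [skip.eq_1 _ _ y, if_pos c1, Texch_left _ _ _ _ (by omega) c1,
          Texch_left _ _ _ _ (by omega) c1, skip, if_neg (by omega)]
        omega
      · rw [skip.eq_1 _ _ y, if_neg c1]
        by_cases c2 : y ≤ a.sum + m'
        · left
          rw [Texch_mid _ _ _ _ (by omega) c2, Texch_mid _ _ _ _ (by omega) (by omega), skip,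
            if_neg (by omega)]
          omega
        · have := hR (y - a.sum - m') (by omega) (by omega)
          have e : y + ((b.sum : ℤ) - a.sum) - a.sum - m = y - a.sum - m' := by omega
          rw [Texch_right _ _ _ _ (by omega) (by omega),
            Texch_right _ _ _ _ (by omega) (by omega), e, skip]
          split_ifs with c3
          · left
            omega
          · right
            rw [Texch_mid _ _ _ _ (by omega) (by omega)]
            omega
    · rintro x ⟨h0, h1⟩
      rw [himg, himg]
      rw [hsum] at h1 ⊢
      by_cases c1 : x ≤ a.sum ∨ b.sum < x
      · left
        omega
      · right
        rw [Texch_mid _ _ _ _ (by omega) (by omega)]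
        omega
  -- `B < A`: discard the last `A - B` points of the block.
  · rw [abs_of_neg (by omega)] at hm
    have himg := fun x => mem_skip_image (a.sum + m') (a.sum - b.sum)
      ((a ++ m' :: b).sum : ℤ) x (by omega) (by rw [hsum]; omega)
    refine orb_collapse_ncard (φ := skip (a.sum + m') (a.sum - b.sum)) (Set.finite_Icc _ _)
      (Texch_mapsTo _) (Texch_injOn _) (Set.finite_Icc _ _) (Texch_mapsTo _) (Texch_injOn _)
      ?_ (skip_injOn _ _ (by omega) _) ?_ ?_
    · rintro y ⟨h0, h1⟩
      rw [hsum] at h1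
      simp only [Set.mem_Icc, skip, hsum]
      split_ifs <;> omega
    · rintro y ⟨h0, h1⟩
      rw [himg]
      rw [hsum] at h1 ⊢
      by_cases c1 : y ≤ a.sum
      · have := hL y (by omega) c1
        rw [skip.eq_1 _ _ y, if_pos (by omega), Texch_left _ _ _ _ (by omega) c1,
          Texch_left _ _ _ _ (by omega) c1, skip]
        split_ifs with c3
        · right
          rw [Texch_mid _ _ _ _ (by omega) (by omega)]
          omega
        · left
          omega
      · by_cases c2 : y ≤ a.sum + m'
        · left
          rw [skip.eq_1 _ _ y, if_pos c2, Texch_mid _ _ _ _ (by omega) c2,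
            Texch_mid _ _ _ _ (by omega) (by omega), skip, if_pos (by omega)]
        · have := hR (y - a.sum - m') (by omega) (by omega)
          have e : y + ((a.sum : ℤ) - b.sum) - a.sum - m = y - a.sum - m' := by omega
          left
          rw [skip.eq_1 _ _ y, if_neg c2, Texch_right _ _ _ _ (by omega) (by omega),
            Texch_right _ _ _ _ (by omega) (by omega), e, skip, if_pos (by omega)]
          omega
    · rintro x ⟨h0, h1⟩
      rw [himg, himg]
      rw [hsum] at h1 ⊢
      by_cases c1 : x ≤ a.sum + m' ∨ a.sum + m < x
      · left
        omega
      · right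
        rw [Texch_mid _ _ _ _ (by omega) (by omega)]
        omega

/-- A part with zero translation parameter consists of fixed points. -/
lemma numOrbits_fixed (a b : List ℕ) (m : ℕ) (heq : a.sum = b.sum) :
    numOrbits (a ++ m :: b) = m + numOrbits (a ++ 0 :: b) := by
  have hsum : ∀ k : ℕ, ((a ++ k :: b).sum : ℤ) = a.sum + k + b.sum := by
    intro k
    simp only [List.sum_append, List.sum_cons, Nat.cast_add]
    ring
  have himg := fun x => mem_skip_image a.sum m
    ((a ++ 0 :: b).sum : ℤ) x (by omega) (by rw [hsum]; omega)
  rw [numOrbits_eq, numOrbits_eq]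
  rw [orb_fixed_ncard (φ := skip a.sum m) (Set.finite_Icc _ _)
      (Texch_mapsTo _) (Texch_injOn _) (Set.finite_Icc _ _) (Texch_mapsTo (a ++ 0 :: b))
      (Texch_injOn _) ?_ (skip_injOn _ _ (by omega) _) ?_ ?_]
  · congr 1
    have : Set.Icc 1 ((a ++ m :: b).sum : ℤ) \
        skip a.sum m '' Set.Icc 1 ((a ++ 0 :: b).sum : ℤ)
        = ((Finset.Ioc (a.sum : ℤ) (a.sum + m) : Finset ℤ) : Set ℤ) := by
      ext x
      rw [Set.mem_sdiff, himg, Set.mem_Icc, hsum, hsum, Finset.mem_coe, Finset.mem_Ioc]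
      omega
    rw [this, Set.ncard_coe_finset, Int.card_Ioc]
    omega
  · rintro y ⟨h0, h1⟩
    rw [hsum] at h1
    simp only [Set.mem_Icc, skip, hsum]
    split_ifs <;> omega
  · rintro y ⟨h0, h1⟩
    rw [hsum] at h1
    by_cases c1 : y ≤ a.sum
    · have := blockSum_bounds a y (by omega) c1
      rw [skip.eq_1 _ _ y, if_pos c1, Texch_left _ _ _ _ (by omega) c1,
        Texch_left _ _ _ _ (by omega) c1, skip, if_neg (by omega)]
      omega
    · have := blockSum_bounds b (y - a.sum - (0 : ℕ)) (by omega) (by omega)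
      have e : y + (m : ℤ) - a.sum - m = y - a.sum - (0 : ℕ) := by omega
      rw [skip.eq_1 _ _ y, if_neg c1, Texch_right _ _ _ _ (by omega) (by omega),
        Texch_right _ _ _ _ (by omega) (by omega), e, skip, if_pos (by omega)]
      omega
  · rintro x ⟨h0, h1⟩
    rw [himg]
    rw [hsum] at h1 ⊢
    intro h
    rw [Texch_mid _ _ _ _ (by omega) (by omega)]
    omega

lemma numOrbits_zero (a b : List ℕ) : numOrbits (a ++ 0 :: b) = numOrbits (a ++ b) := by
  have hs : (a ++ 0 :: b).sum = (a ++ b).sum := by simp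
  have hT : Texch (a ++ 0 :: b) = Texch (a ++ b) := by
    funext x
    rw [Texch_eq, Texch_eq, hs]
    by_cases h : 0 < x ∧ x ≤ ((a ++ b).sum : ℤ)
    · rw [if_pos h, if_pos h, blockSum_append _ _ _ h.1, blockSum_append _ _ _ h.1]
      by_cases h2 : x ≤ a.sum
      · rw [if_pos h2, if_pos h2]
      · rw [if_neg h2, if_neg h2, blockSum, if_neg (by simp only [Nat.cast_zero]; omega)]
        simp
    · rw [if_neg h, if_neg h]
  rw [numOrbits_eq, numOrbits_eq, hT, hs]

lemma numOrbits_nil : numOrbits [] = 0 := by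
  rw [numOrbits_eq]
  simp

lemma numOrbits_short (l : List ℕ) (h : l.length ≤ 1) : numOrbits l = l.sum := by
  match l, h with
  | [], _ => exact numOrbits_nil
  | [m], _ =>
    have h1 := numOrbits_fixed [] [] m rfl
    have h2 := numOrbits_zero [] []
    simp only [List.nil_append] at h1 h2
    rw [h1, h2, numOrbits_nil, List.sum_singleton, add_zero]

/-! ### Running the recursion -/

/-- Auxiliary form of `exists_central`, with `A` the sum of parts already passed. -/
lemma exists_central_aux (l : List ℕ) (A : ℕ) (hl : l ≠ []) (hA : A ≤ l.sum) :
    ∃ t, t < l.length ∧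
      |((l.drop (t + 1)).sum : ℤ) - (A + ((l.take t).sum : ℤ))| ≤ (l.getD t 0 : ℤ) := by
  induction l generalizing A with
  | nil => exact absurd rfl hl
  | cons m b ih =>
    rw [List.sum_cons] at hA
    by_cases h : b.sum ≤ A + m
    · refine ⟨0, by simp, ?_⟩
      simp only [zero_add, List.drop_succ_cons, List.drop_zero, List.take_zero, List.sum_nil,
        List.getD_cons_zero]
      rw [abs_le]
      simp only [Nat.cast_zero]
      omega
    · have hb : b ≠ [] := by
        rintro rfl
        simp at h
      obtain ⟨t, ht, hle⟩ := ih (A + m) hb (by omega)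
      refine ⟨t + 1, by simpa using ht, ?_⟩
      simp only [List.drop_succ_cons, List.take_succ_cons, List.sum_cons, List.getD_cons_succ]
      rw [abs_le] at hle ⊢
      simp only [Nat.cast_add] at hle ⊢
      omega

lemma exists_central (l : List ℕ) (hl : l ≠ []) :
    ∃ t, t < l.length ∧ |transParam l t| ≤ (l.getD t 0 : ℤ) := by
  obtain ⟨t, ht, h⟩ := exists_central_aux l 0 hl (Nat.zero_le _)
  exact ⟨t, ht, by simpa [transParam] using h⟩

lemma numOrbits_eq_fRec (l : List ℕ) : numOrbits l = fRec l := by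
  induction hN : l.sum + l.length using Nat.strong_induction_on generalizing l with
  | _ N ih =>
    subst hN
    rw [fRec]
    by_cases hlen : l.length ≤ 1
    · rw [dif_pos hlen]
      exact numOrbits_short l hlen
    have hex := exists_central l (by rintro rfl; simp at hlen)
    rw [dif_neg hlen, dif_pos hex]
    obtain ⟨ht, hle⟩ := Nat.find_spec hex
    generalize Nat.find hex = t at ht hle ⊢
    obtain ⟨a, m, b, rfl, rfl⟩ : ∃ a m b, l = a ++ m :: b ∧ t = a.length :=
      ⟨l.take t, l[t], l.drop (t + 1), by simp, by simp; omega⟩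
    have hget : (a ++ m :: b).getD a.length 0 = m := by simp
    have hpar : transParam (a ++ m :: b) a.length = (b.sum : ℤ) - a.sum := by
      simp [transParam]
    have herase : (a ++ m :: b).eraseIdx a.length = a ++ b := by
      simp [List.eraseIdx_append_of_length_le]
    have hset : ∀ v, (a ++ m :: b).set a.length v = a ++ v :: b := by simp
    simp only [hget, hpar, herase, hset] at hle ⊢
    have ih1 : numOrbits (a ++ b) = fRec (a ++ b) :=
      ih _ (by simp; omega) _ rfl
    have habs := Int.abs_eq_natAbs ((b.sum : ℤ) - a.sum)
    split_ifs with h0 h1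
    · rw [numOrbits_fixed a b m (by omega), numOrbits_zero, ih1]
    · rw [numOrbits_reduce a b m 0 (by omega) (by omega), numOrbits_zero, ih1]
    · rw [numOrbits_reduce a b m (m - ((b.sum : ℤ) - a.sum).natAbs) (by omega) (by omega)]
      refine ih _ ?_ _ rfl
      simp only [List.sum_append, List.sum_cons, List.length_append, List.length_cons]
      omega

/-- Corollary 3.6: `T_λ` is minimal (has exactly one orbit)
iff `f(λ) = 1`. -/
theorem minimal_iff_fRec_eq_one (l : List ℕ) (hl : IsComposition l) :
    numOrbits l = 1 ↔ fRec l = 1 := by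
  rw [numOrbits_eq_fRec]
end
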